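/- Suppose ρ_m > ρ_l > 0, u_l > 0, u_m = 0, and σ₋ satisfies σ₋(ρ_l − ρ_m) = ρ_l u_l and σ₋ ρ_l u_l = ρ_l u_l² + ρ_l − ρ_m (isothermal pressure p = ρ). Then −1 < σ₋ < u_l − 1. -/

import Mathlib

/-- Lax entropy inequality for the left (1-)shock: −1 < σ₋ < u_l − 1. -/
theorem stmt_12 (ρm ρl ul σ : ℝ)
    (h1 : ρm > ρl) (h2 : 0 < ρl) (h3 : 0 < ul)
    (hRH1 : σ * (ρl - ρm) = ρl * ul)
    (hRH2 : σ * (ρl * ul) = ρl * ul ^ 2 + ρl - ρm) :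
    -1 < σ ∧ σ < ul - 1 := by
  have hd : 0 < ρm - ρl := sub_pos.mpr h1
  have hσ : σ < 0 := by
    have := mul_pos h2 h3
    by_contra! h
    nlinarith [mul_nonneg h hd.le]
  -- Eliminating the densities leaves a quadratic relation between the two speeds.
  have hquad : -σ * (ul - σ) = 1 := by
    apply mul_left_cancel₀ hd.ne'
    linear_combination (ul - σ) * hRH1 - hRH2
  constructor
  · by_contra! h
    nlinarith
  · by_contra! h
    nlinarith
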